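/- For every γ > 0, every cost matrix M ∈ ℝ_{≥0}^{n×s} and every fixed p ∈ Σ_n, the function q ↦ W_γ(p,q) is strictly convex on the simplex Σ_s. -/

import Mathlib

open Finset

noncomputable section

/-- The simplex Σ_n: nonnegative vectors in ℝ^n summing to 1. -/
def simplex (n : ℕ) : Set (Fin n → ℝ) :=
  {p | (∀ i, 0 ≤ p i) ∧ ∑ i, p i = 1}

/-- The transport polytope U(p,q): nonnegative n×s matrices with row sums p
and column sums q. -/
def transportPolytope {n s : ℕ} (p : Fin n → ℝ) (q : Fin s → ℝ) :
    Set (Matrix (Fin n) (Fin s) ℝ) :=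
  {T | (∀ i j, 0 ≤ T i j) ∧ (∀ i, ∑ j, T i j = p i) ∧ (∀ j, ∑ i, T i j = q j)}

/-- Frobenius inner product ⟨T,M⟩ = Σ_{i,j} T_{ij} M_{ij}. -/
def frob {n s : ℕ} (T M : Matrix (Fin n) (Fin s) ℝ) : ℝ :=
  ∑ i, ∑ j, T i j * M i j

/-- The entropy h(T) = −Σ_{i,j} T_{ij} log T_{ij} (Real.log 0 = 0, so 0 log 0 = 0). -/
def entropy {n s : ℕ} (T : Matrix (Fin n) (Fin s) ℝ) : ℝ :=
  -∑ i, ∑ j, T i j * Real.log (T i j)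

/-- The Wasserstein distance W(p,q) = inf_{T ∈ U(p,q)} ⟨T,M⟩. -/
def W {n s : ℕ} (M : Matrix (Fin n) (Fin s) ℝ) (p : Fin n → ℝ) (q : Fin s → ℝ) : ℝ :=
  sInf ((fun T => frob T M) '' transportPolytope p q)

/-- The smoothed Wasserstein distance W_γ(p,q) = inf_{T ∈ U(p,q)} ⟨T,M⟩ − γ h(T). -/
def Wsmooth {n s : ℕ} (γ : ℝ) (M : Matrix (Fin n) (Fin s) ℝ)
    (p : Fin n → ℝ) (q : Fin s → ℝ) : ℝ :=
  sInf ((fun T => frob T M - γ * entropy T) '' transportPolytope p q)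

/-!
The plans with nonnegative entries form a convex set on which `T ↦ ⟨T, M⟩ - γ h(T)` is strictly
convex, and `U(p, q)` is a fibre over `(p, q)` of the linear map sending a plan to its two marginals.
Minimising a strictly convex function over the fibres of a linear map leaves a strictly convex
function, provided the minima are attained: combining optimal plans for two distinct pairs of
marginals gives a plan for the combined marginals, and the two plans differ since their marginals do.
Attainment comes from compactness of `U(p, q)`. Since both marginals enter through the same linear
map, the argument gives strict convexity jointly in `(p, q)`.
-/

section Convexity

variable {𝕜 β : Type*}

theorem strictConcaveOn_smul {E : Type*} [CommSemiring 𝕜] [PartialOrder 𝕜] [AddCommMonoid E]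
    [SMul 𝕜 E] [AddCommMonoid β] [PartialOrder β] [Module 𝕜 β] [PosSMulStrictMono 𝕜 β]
    {D : Set E} {f : E → β} {c : 𝕜} (hc : 0 < c) (hf : StrictConcaveOn 𝕜 D f) :
    StrictConcaveOn 𝕜 D fun x => c • f x := by
  refine ⟨hf.1, fun x hx y hy hxy a b ha hb hab => ?_⟩
  calc a • c • f x + b • c • f y = c • (a • f x + b • f y) := by
        rw [smul_add, smul_comm c, smul_comm c]
    _ < c • f (a • x + b • y) := smul_lt_smul_of_pos_left (hf.2 hx hy hxy ha hb hab) hc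

theorem strictConcaveOn_sum_apply {ι : Type*} [Fintype ι] {E : ι → Type*} [Semiring 𝕜]
    [PartialOrder 𝕜] [∀ i, AddCommMonoid (E i)] [∀ i, Module 𝕜 (E i)] [AddCommMonoid β]
    [PartialOrder β] [IsOrderedCancelAddMonoid β] [Module 𝕜 β] {D : ∀ i, Set (E i)}
    {f : ∀ i, E i → β} (hf : ∀ i, StrictConcaveOn 𝕜 (D i) (f i)) :
    StrictConcaveOn 𝕜 (Set.univ.pi D) fun x => ∑ i, f i (x i) := by
  refine ⟨convex_pi fun i _ => (hf i).1, fun x hx y hy hxy a b ha hb hab => ?_⟩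
  obtain ⟨k, hk⟩ := Function.ne_iff.1 hxy
  simp only [smul_sum, ← sum_add_distrib]
  exact sum_lt_sum
    (fun i _ => (hf i).concaveOn.2 (hx i trivial) (hy i trivial) ha.le hb.le hab)
    ⟨k, mem_univ k, (hf k).2 (hx k trivial) (hy k trivial) hk ha hb hab⟩

theorem strictConvexOn_of_isLeast_image_fiber {E F : Type*} [Semiring 𝕜] [PartialOrder 𝕜]
    [AddCommMonoid E] [Module 𝕜 E] [AddCommMonoid F] [Module 𝕜 F] [AddCommMonoid β]
    [PartialOrder β] [SMul 𝕜 β] {K : Set E} {f : E → β} (hf : StrictConvexOn 𝕜 K f)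
    (g : E →ₗ[𝕜] F) {φ : F → β} (hφ : ∀ y ∈ g '' K, IsLeast (f '' (K ∩ g ⁻¹' {y})) (φ y)) :
    StrictConvexOn 𝕜 (g '' K) φ := by
  have hconv : Convex 𝕜 (g '' K) := hf.1.linear_image g
  refine ⟨hconv, fun x hx y hy hxy a b ha hb hab => ?_⟩
  obtain ⟨A, ⟨hAK, rfl⟩, hA⟩ := (hφ x hx).1
  obtain ⟨B, ⟨hBK, rfl⟩, hB⟩ := (hφ y hy).1
  have hAB : A ≠ B := ne_of_apply_ne g hxy
  have hmem : a • A + b • B ∈ K ∩ g ⁻¹' {a • g A + b • g B} :=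
    ⟨hf.1 hAK hBK ha.le hb.le hab, by simp⟩
  calc φ (a • g A + b • g B) ≤ f (a • A + b • B) :=
        (hφ _ (hconv hx hy ha.le hb.le hab)).2 ⟨_, hmem, rfl⟩
    _ < a • f A + b • f B := hf.2 hAK hBK hAB ha hb hab
    _ = a • φ (g A) + b • φ (g B) := by rw [hA, hB]

theorem strictConvexOn_prodMk {E F : Type*} [Semiring 𝕜] [PartialOrder 𝕜] [AddCommMonoid E]
    [Module 𝕜 E] [AddCommMonoid F] [SMul 𝕜 F] [AddCommMonoid β] [PartialOrder β] [SMul 𝕜 β]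
    {D : Set (E × F)} {f : E × F → β} (hf : StrictConvexOn 𝕜 D f) (x : E) :
    StrictConvexOn 𝕜 (Prod.mk x ⁻¹' D) fun y => f (x, y) := by
  have mk_combo {a b : 𝕜} (hab : a + b = 1) (y z : F) :
      (x, a • y + b • z) = a • (x, y) + b • (x, z) := by
    ext1 <;> simp [Convex.combo_self hab]
  refine ⟨fun y hy z hz a b ha hb hab => ?_, fun y hy z hz hyz a b ha hb hab => ?_⟩
  · rw [Set.mem_preimage, mk_combo hab]
    exact hf.1 hy hz ha hb hab
  · simp only [mk_combo hab]
    exact hf.2 hy hz ((Prod.mk_right_injective x).ne hyz) ha hb hab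

end Convexity

section Transport

variable {n s : ℕ}

theorem convexOn_frob (M : Matrix (Fin n) (Fin s) ℝ) {D : Set (Matrix (Fin n) (Fin s) ℝ)}
    (hD : Convex ℝ D) : ConvexOn ℝ D fun T => frob T M := by
  have hlin : IsLinearMap ℝ fun T => frob T M :=
    { map_add := fun A B => by simp [frob, add_mul, sum_add_distrib]
      map_smul := fun c A => by simp [frob, mul_sum, mul_assoc] }
  exact (hlin.mk' _).convexOn hD

theorem entropy_eq_sum_negMulLog (T : Matrix (Fin n) (Fin s) ℝ) :
    entropy T = ∑ i, ∑ j, Real.negMulLog (T i j) := by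
  simp [entropy, Real.negMulLog]

theorem strictConcaveOn_entropy :
    StrictConcaveOn ℝ {T : Matrix (Fin n) (Fin s) ℝ | ∀ i j, 0 ≤ T i j} entropy := by
  have hsum := strictConcaveOn_sum_apply fun _ : Fin n =>
    strictConcaveOn_sum_apply fun _ : Fin s => Real.strictConcaveOn_negMulLog
  have hdom : (Set.univ.pi fun _ => Set.univ.pi fun _ => Set.Ici 0) =
      {T : Fin n → Fin s → ℝ | ∀ i j, 0 ≤ T i j} := by
    ext T
    simp only [Set.mem_univ_pi, Set.mem_Ici, Set.mem_ofPred_eq]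
  rw [hdom] at hsum
  rw [funext entropy_eq_sum_negMulLog]
  exact hsum

theorem strictConvexOn_frob_sub_entropy {γ : ℝ} (hγ : 0 < γ) (M : Matrix (Fin n) (Fin s) ℝ) :
    StrictConvexOn ℝ {T : Matrix (Fin n) (Fin s) ℝ | ∀ i j, 0 ≤ T i j}
      fun T => frob T M - γ * entropy T :=
  (convexOn_frob M strictConcaveOn_entropy.1).sub_strictConcaveOn
    (strictConcaveOn_smul hγ strictConcaveOn_entropy)

theorem continuous_frob_sub_entropy (γ : ℝ) (M : Matrix (Fin n) (Fin s) ℝ) :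
    Continuous fun T : Matrix (Fin n) (Fin s) ℝ => frob T M - γ * entropy T := by
  simp only [entropy_eq_sum_negMulLog, frob]
  fun_prop

/-- The linear map `T ↦ (T𝟙, Tᵀ𝟙)` sending a plan to its row and column sums; its fibres over the
nonnegative plans are the transport polytopes. -/
def marginals : Matrix (Fin n) (Fin s) ℝ →ₗ[ℝ] (Fin n → ℝ) × (Fin s → ℝ) where
  toFun T := (fun i => ∑ j, T i j, fun j => ∑ i, T i j)
  map_add' A B := by ext <;> simp [sum_add_distrib]
  map_smul' c A := by ext <;> simp [mul_sum]

theorem transportPolytope_eq_inter_preimage_marginals (p : Fin n → ℝ) (q : Fin s → ℝ) :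
    transportPolytope p q = {T | ∀ i j, 0 ≤ T i j} ∩ marginals ⁻¹' {(p, q)} := by
  ext T
  simp [transportPolytope, marginals, Prod.ext_iff, funext_iff]

theorem transportPolytope_nonempty {p : Fin n → ℝ} {q : Fin s → ℝ} (hp : p ∈ simplex n)
    (hq : q ∈ simplex s) : (transportPolytope p q).Nonempty := by
  refine ⟨Matrix.vecMulVec p q, fun i j => mul_nonneg (hp.1 i) (hq.1 j), fun i => ?_, fun j => ?_⟩
  · simp [Matrix.vecMulVec_apply, ← mul_sum, hq.2]
  · simp [Matrix.vecMulVec_apply, ← sum_mul, hp.2]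

theorem isCompact_transportPolytope (p : Fin n → ℝ) (q : Fin s → ℝ) :
    IsCompact (transportPolytope p q) := by
  have hclosed : IsClosed (transportPolytope p q) := by
    simp only [transportPolytope, Set.ofPred_and, Set.ofPred_forall]
    refine .inter ?_ (.inter ?_ ?_)
    · exact isClosed_iInter fun i => isClosed_iInter fun j =>
        isClosed_le (by fun_prop) (by fun_prop)
    · exact isClosed_iInter fun i => isClosed_eq (by fun_prop) (by fun_prop)
    · exact isClosed_iInter fun j => isClosed_eq (by fun_prop) (by fun_prop)
  have hbox : IsCompact (Set.Icc (0 : Fin n → Fin s → ℝ) fun i _ => p i) := isCompact_Icc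
  refine hbox.of_isClosed_subset hclosed fun T ⟨hT, hrow, _⟩ => ⟨hT, fun i j => ?_⟩
  calc T i j ≤ ∑ k, T i k := single_le_sum (fun k _ => hT i k) (mem_univ j)
    _ = p i := hrow i

theorem isLeast_Wsmooth (γ : ℝ) (M : Matrix (Fin n) (Fin s) ℝ) {p : Fin n → ℝ} {q : Fin s → ℝ}
    (hpq : (transportPolytope p q).Nonempty) :
    IsLeast ((fun T => frob T M - γ * entropy T) '' transportPolytope p q) (Wsmooth γ M p q) :=
  ((isCompact_transportPolytope p q).image (continuous_frob_sub_entropy γ M)).isLeast_sInf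
    (hpq.image _)

theorem image_marginals_nonneg :
    marginals '' {T : Matrix (Fin n) (Fin s) ℝ | ∀ i j, 0 ≤ T i j} =
      {x | (transportPolytope x.1 x.2).Nonempty} := by
  ext x
  simp only [transportPolytope_eq_inter_preimage_marginals]
  rfl

theorem wassersteinSmooth_strictConvexOn_general {γ : ℝ} (hγ : 0 < γ)
    (M : Matrix (Fin n) (Fin s) ℝ) :
    StrictConvexOn ℝ {x : (Fin n → ℝ) × (Fin s → ℝ) | (transportPolytope x.1 x.2).Nonempty}
      fun x => Wsmooth γ M x.1 x.2 := by
  rw [← image_marginals_nonneg]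
  refine strictConvexOn_of_isLeast_image_fiber (strictConvexOn_frob_sub_entropy hγ M) marginals
    fun x hx => ?_
  rw [image_marginals_nonneg] at hx
  rw [← transportPolytope_eq_inter_preimage_marginals]
  exact isLeast_Wsmooth γ M hx

end Transport

/-- for γ > 0, q ↦ W_γ(p,q) is strictly convex on the simplex Σ_s. -/
theorem wassersteinSmooth_strictConvexOn
    (n s : ℕ) (hn : 0 < n) (hs : 0 < s)
    (γ : ℝ) (hγ : 0 < γ)
    (M : Matrix (Fin n) (Fin s) ℝ) (hM : ∀ i j, 0 ≤ M i j)
    (p : Fin n → ℝ) (hp : p ∈ simplex n) :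
    StrictConvexOn ℝ (simplex s) (fun q => Wsmooth γ M p q) :=
  (strictConvexOn_prodMk (wassersteinSmooth_strictConvexOn_general hγ M) p).subset
    (fun _ hq => transportPolytope_nonempty hp hq) (convex_stdSimplex ℝ (Fin s))
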